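/- arXiv:2205.08672 — 4 statements merged into one kernel-verified Lean document; each statement's English description precedes it below -/
import Mathlib

section
/- With the notation of the context, the map z ↦ z^{2} := z₀^[2] + q(z₁) + ⁅z₁,z₀⁆ is a 2-operation on the Lie algebra L; that is, for all α ∈ k and z, w ∈ L: (R1) (α•z)^{2} = α²•(z^{2}); (R2) ⁅z^{2}, w⁆ = ⁅z, ⁅z, w⁆⁆; (R3) (z+w)^{2} = z^{2} + w^{2} + ⁅w, z⁆. Hence L, with this 2-operation, is a restricted Lie algebra over k. -/
/-!
In characteristic `2` the bracket is symmetric, so the quadratic operator on `L₁` and the `2`-map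
on `L₀` obey the very same axioms: the value at `x` acts as `(ad x)²`, and the polar form is the
bracket. The Jacobi identity reads `(ad (x + y))² = (ad x)² + (ad y)² + ad ⁅y, x⁆`, and the
correction term `⁅y, x⁆` is exactly what glues the operations on two submodules into one on their
sum.
-/

theorem neg_eq_self_of_charP_two (R : Type*) {M : Type*} [Ring R] [CharP R 2]
    [AddCommGroup M] [Module R M] (x : M) : -x = x := by
  rw [← neg_one_smul R x, CharTwo.neg_eq, one_smul]

theorem lie_comm_of_charP_two (R : Type*) {L : Type*} [Ring R] [CharP R 2]
    [LieRing L] [Module R L] (x y : L) : ⁅x, y⁆ = ⁅y, x⁆ := by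
  rw [← lie_skew, neg_eq_self_of_charP_two R]

theorem add_lie_add_lie_of_charP_two (R : Type*) {L : Type*} [Ring R] [CharP R 2]
    [LieRing L] [Module R L] (x y z : L) :
    ⁅x + y, ⁅x + y, z⁆⁆ = ⁅x, ⁅x, z⁆⁆ + ⁅y, ⁅y, z⁆⁆ + ⁅⁅y, x⁆, z⁆ := by
  have jacobi : ⁅⁅y, x⁆, z⁆ = ⁅y, ⁅x, z⁆⁆ + ⁅x, ⁅y, z⁆⁆ := by
    rw [lie_lie, sub_eq_add_neg, neg_eq_self_of_charP_two R]
  rw [jacobi]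
  simp only [add_lie, lie_add]
  abel

section TwoOperation

variable {R L : Type*} [CommRing R] [LieRing L] [LieAlgebra R L]

/-- `f` satisfies the axioms (R1)–(R3) of a `2`-operation for arguments in the submodule `S`, with
(R2) tested against all of `L`. A `2`-operation on `L` is the case `S = ⊤`. Values of `f` outside
`S` are irrelevant, and those on `S` are not required to lie in `S`, so that the quadratic operator
`L₁ → L₀` of a Lie superalgebra is an instance. -/
structure IsTwoOperationOn (S : Submodule R L) (f : L → L) : Prop where
  map_smul : ∀ a : R, ∀ x ∈ S, f (a • x) = a ^ 2 • f x
  lie_apply : ∀ x ∈ S, ∀ z : L, ⁅f x, z⁆ = ⁅x, ⁅x, z⁆⁆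
  map_add : ∀ x ∈ S, ∀ y ∈ S, f (x + y) = f x + f y + ⁅y, x⁆

theorem restricted_two_operation_on_underlying_lie_algebra_general [CharP R 2]
    {S T : Submodule R L} {f g P : L → L} (hf : IsTwoOperationOn S f) (hg : IsTwoOperationOn T g)
    (hP : ∀ x ∈ S, ∀ y ∈ T, P (x + y) = f x + g y + ⁅y, x⁆) :
    IsTwoOperationOn (S ⊔ T) P where
  map_smul a z hz := by
    obtain ⟨x, hx, y, hy, rfl⟩ := Submodule.mem_sup.1 hz
    rw [smul_add, hP _ (S.smul_mem a hx) _ (T.smul_mem a hy), hP x hx y hy, hf.map_smul a x hx,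
      hg.map_smul a y hy, smul_lie, lie_smul, smul_smul, ← pow_two, smul_add, smul_add]
  lie_apply z hz w := by
    obtain ⟨x, hx, y, hy, rfl⟩ := Submodule.mem_sup.1 hz
    rw [hP x hx y hy, add_lie, add_lie, hf.lie_apply x hx, hg.lie_apply y hy,
      add_lie_add_lie_of_charP_two R]
  map_add z hz w hw := by
    obtain ⟨x, hx, y, hy, rfl⟩ := Submodule.mem_sup.1 hz
    obtain ⟨x', hx', y', hy', rfl⟩ := Submodule.mem_sup.1 hw
    rw [add_add_add_comm, hP _ (S.add_mem hx hx') _ (T.add_mem hy hy'), hP x hx y hy,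
      hP x' hx' y' hy', hf.map_add x hx x' hx', hg.map_add y hy y' hy']
    simp only [add_lie, lie_add, lie_comm_of_charP_two R x' y]
    abel

end TwoOperation

/-- Lemma 2.12 of the paper (first assertion): for a restricted Lie superalgebra `L` over a
field `k` of characteristic `2` — encoded as an ordinary `ℤ/2`-graded Lie algebra
`L = L₀ ⊕ L₁` with quadratic operator `q : L₁ → L₀` and 2-map `x ↦ x^[2]` on `L₀` — the map
`z = z₀ + z₁ ↦ z^{2} := z₀^[2] + q(z₁) + ⁅z₁, z₀⁆` is a 2-operation on the underlying
ordinary Lie algebra `L`, i.e. it satisfies (R1) `(α•z)^{2} = α²•z^{2}`,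
(R2) `⁅z^{2}, w⁆ = ⁅z, ⁅z, w⁆⁆`, and (R3) `(z+w)^{2} = z^{2} + w^{2} + ⁅w, z⁆`,
making `L` a restricted Lie algebra over `k`. -/
theorem restricted_two_operation_on_underlying_lie_algebra
    (k : Type*) [Field k] [CharP k 2]
    (L : Type*) [LieRing L] [LieAlgebra k L]
    (L₀ L₁ : Submodule k L)
    (p₀ p₁ : L → L)
    (hmem : ∀ z : L, p₀ z ∈ L₀ ∧ p₁ z ∈ L₁ ∧ z = p₀ z + p₁ z)
    (huniq : ∀ z x y : L, x ∈ L₀ → y ∈ L₁ → z = x + y → p₀ z = x ∧ p₁ z = y)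
    (hb00 : ∀ x ∈ L₀, ∀ x' ∈ L₀, ⁅x, x'⁆ ∈ L₀)
    (hb01 : ∀ x ∈ L₀, ∀ y ∈ L₁, ⁅x, y⁆ ∈ L₁)
    (hb11 : ∀ y ∈ L₁, ∀ y' ∈ L₁, ⁅y, y'⁆ ∈ L₀)
    (q : L → L)
    (hq_mem : ∀ y ∈ L₁, q y ∈ L₀)
    (hq_smul : ∀ (α : k), ∀ y ∈ L₁, q (α • y) = (α ^ 2) • q y)
    (hq_add : ∀ y ∈ L₁, ∀ y' ∈ L₁, q (y + y') = q y + q y' + ⁅y, y'⁆)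
    (hq_ad : ∀ y ∈ L₁, ∀ z : L, ⁅y, ⁅y, z⁆⁆ = ⁅q y, z⁆)
    (sq : L → L)
    (hsq_mem : ∀ x ∈ L₀, sq x ∈ L₀)
    (hsq_smul : ∀ (α : k), ∀ x ∈ L₀, sq (α • x) = (α ^ 2) • sq x)
    (hsq_ad : ∀ x ∈ L₀, ∀ z : L, ⁅sq x, z⁆ = ⁅x, ⁅x, z⁆⁆)
    (hsq_add : ∀ x ∈ L₀, ∀ x' ∈ L₀, sq (x + x') = sq x + sq x' + ⁅x', x⁆)
    (P : L → L)
    (hP : ∀ z : L, P z = sq (p₀ z) + q (p₁ z) + ⁅p₁ z, p₀ z⁆) :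
    (∀ (α : k) (z : L), P (α • z) = (α ^ 2) • P z) ∧
    (∀ z w : L, ⁅P z, w⁆ = ⁅z, ⁅z, w⁆⁆) ∧
    (∀ z w : L, P (z + w) = P z + P w + ⁅w, z⁆) := by
  have hsq : IsTwoOperationOn L₀ sq := ⟨hsq_smul, hsq_ad, hsq_add⟩
  have hq : IsTwoOperationOn L₁ q :=
    ⟨hq_smul, fun y hy z ↦ (hq_ad y hy z).symm,
      fun y hy y' hy' ↦ by rw [hq_add y hy y' hy', lie_comm_of_charP_two k]⟩
  have P_add : ∀ x ∈ L₀, ∀ y ∈ L₁, P (x + y) = sq x + q y + ⁅y, x⁆ := fun x hx y hy ↦ by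
    obtain ⟨h₀, h₁⟩ := huniq (x + y) x y hx hy rfl
    rw [hP, h₀, h₁]
  have mem_sup (z : L) : z ∈ L₀ ⊔ L₁ :=
    Submodule.mem_sup.2 ⟨p₀ z, (hmem z).1, p₁ z, (hmem z).2.1, (hmem z).2.2.symm⟩
  have hP_two := restricted_two_operation_on_underlying_lie_algebra_general hsq hq P_add
  exact ⟨fun α z ↦ hP_two.map_smul α z (mem_sup z), fun z ↦ hP_two.lie_apply z (mem_sup z),
    fun z w ↦ hP_two.map_add z (mem_sup z) w (mem_sup w)⟩
end

section
/- With the notation of the context, let U(L) be the universal enveloping algebra of the Lie algebra L with canonical map ι : L → U(L). Then for every z ∈ L with decomposition z = z₀ + z₁ (z₀ ∈ L₀, z₁ ∈ L₁), the following identity holds in U(L): ι(z)² − ι(z^{2}) = (ι(z₀)² − ι(z₀^[2])) + (ι(z₁)² − ι(q(z₁))). -/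
/-!
In an associative algebra of characteristic `2` the cross term `a * b + b * a` of `(a + b) ^ 2` is
the commutator `⁅b, a⁆`. For `a = ι z₀` and `b = ι z₁` it is therefore `ι ⁅z₁, z₀⁆`, which cancels
against the bracket in `z^{2}`.
-/

section AssociativeLieRing

attribute [local instance 100] LieRing.ofAssociativeRing

theorem add_sq_eq_sq_add_sq_add_lie_add_two_mul {A : Type*} [Ring A] (a b : A) :
    (a + b) ^ 2 = a ^ 2 + b ^ 2 + ⁅b, a⁆ + 2 * (a * b) := by
  rw [Ring.lie_def]
  noncomm_ring

theorem two_eq_zero_of_algebra_charTwo (R A : Type*) [CommSemiring R] [CharP R 2] [Semiring A]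
    [Algebra R A] : (2 : A) = 0 := by
  rw [← map_ofNat (algebraMap R A) 2, CharTwo.two_eq_zero, map_zero]

variable {R L A : Type*} [CommRing R] [CharP R 2] [LieRing L] [LieAlgebra R L] [Ring A]
  [Algebra R A]

theorem lieHom_map_add_sq_of_charTwo (f : L →ₗ⁅R⁆ A) (x y : L) :
    f (x + y) ^ 2 = f x ^ 2 + f y ^ 2 + f ⁅y, x⁆ := by
  rw [map_add, add_sq_eq_sq_add_sq_add_lie_add_two_mul, two_eq_zero_of_algebra_charTwo R A,
    zero_mul, add_zero, LieHom.map_lie]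

theorem universal_enveloping_square_identity_general (f : L →ₗ⁅R⁆ A) (x y s t : L) :
    f (x + y) ^ 2 - f (s + t + ⁅y, x⁆) = (f x ^ 2 - f s) + (f y ^ 2 - f t) := by
  rw [lieHom_map_add_sq_of_charTwo, map_add, map_add, add_sub_add_right_eq_sub,
    add_sub_add_comm]

end AssociativeLieRing

open UniversalEnvelopingAlgebra in
/-- The key computation in the proof of Lemma 2.12 of the paper: in the universal enveloping
algebra `U(L)` of the ordinary Lie algebra underlying a restricted Lie superalgebra `L`
over a field of characteristic `2`, for `z = z₀ + z₁` one has
`ι(z)² − ι(z^{2}) = (ι(z₀)² − ι(z₀^[2])) + (ι(z₁)² − ι(q(z₁)))`. -/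
theorem universal_enveloping_square_identity
    (k : Type*) [Field k] [CharP k 2]
    (L : Type*) [LieRing L] [LieAlgebra k L]
    (L₀ L₁ : Submodule k L)
    (p₀ p₁ : L → L)
    (hmem : ∀ z : L, p₀ z ∈ L₀ ∧ p₁ z ∈ L₁ ∧ z = p₀ z + p₁ z)
    (huniq : ∀ z x y : L, x ∈ L₀ → y ∈ L₁ → z = x + y → p₀ z = x ∧ p₁ z = y)
    (hb00 : ∀ x ∈ L₀, ∀ x' ∈ L₀, ⁅x, x'⁆ ∈ L₀)
    (hb01 : ∀ x ∈ L₀, ∀ y ∈ L₁, ⁅x, y⁆ ∈ L₁)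
    (hb11 : ∀ y ∈ L₁, ∀ y' ∈ L₁, ⁅y, y'⁆ ∈ L₀)
    (q : L → L)
    (hq_mem : ∀ y ∈ L₁, q y ∈ L₀)
    (hq_smul : ∀ (α : k), ∀ y ∈ L₁, q (α • y) = (α ^ 2) • q y)
    (hq_add : ∀ y ∈ L₁, ∀ y' ∈ L₁, q (y + y') = q y + q y' + ⁅y, y'⁆)
    (hq_ad : ∀ y ∈ L₁, ∀ z : L, ⁅y, ⁅y, z⁆⁆ = ⁅q y, z⁆)
    (sq : L → L)
    (hsq_mem : ∀ x ∈ L₀, sq x ∈ L₀)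
    (hsq_smul : ∀ (α : k), ∀ x ∈ L₀, sq (α • x) = (α ^ 2) • sq x)
    (hsq_ad : ∀ x ∈ L₀, ∀ z : L, ⁅sq x, z⁆ = ⁅x, ⁅x, z⁆⁆)
    (hsq_add : ∀ x ∈ L₀, ∀ x' ∈ L₀, sq (x + x') = sq x + sq x' + ⁅x', x⁆)
    (P : L → L)
    (hP : ∀ z : L, P z = sq (p₀ z) + q (p₁ z) + ⁅p₁ z, p₀ z⁆) :
    ∀ z : L,
      (ι k z : UniversalEnvelopingAlgebra k L) ^ 2 - ι k (P z) =
        ((ι k (p₀ z) : UniversalEnvelopingAlgebra k L) ^ 2 - ι k (sq (p₀ z))) +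
          ((ι k (p₁ z) : UniversalEnvelopingAlgebra k L) ^ 2 - ι k (q (p₁ z))) := by
  intro z
  simpa only [hP, ← (hmem z).2.2] using
    universal_enveloping_square_identity_general (ι k) (p₀ z) (p₁ z) (sq (p₀ z)) (q (p₁ z))
end

section
/- With the notation of the context, let U(L) be the universal enveloping algebra of the Lie algebra L with canonical map ι : L → U(L). Then the two-sided ideal of U(L) generated by the set { ι(z)² − ι(z^{2}) : z ∈ L } is equal to the two-sided ideal of U(L) generated by the set { ι(x)² − ι(x^[2]) : x ∈ L₀ } ∪ { ι(y)² − ι(q(y)) : y ∈ L₁ }. Consequently, the quotients of U(L) by these two ideals — the restricted enveloping algebra V(ol(L)) of the restricted Lie algebra ol(L) and the restricted enveloping superalgebra V(L) of the restricted Lie superalgebra L — are canonically isomorphic as k-algebras. -/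
/-!
In an associative algebra of characteristic two, `(a + b)² = a² + b² + [b, a]`. Hence for `x ∈ L₀`
and `y ∈ L₁` the relator `ι(x + y)² − ι((x + y)^{2})` is the sum of the relators of `x` and of `y`,
the cross terms cancelling because `(x + y)^{2} = x^[2] + q(y) + [y, x]`. Conversely, the relators
of `x` and `y` are those of `x + 0` and `0 + y`.
-/

theorem add_sq_of_two_eq_zero {A : Type*} [Ring A] (h : (2 : A) = 0) (a b : A) :
    (a + b) ^ 2 = a ^ 2 + b ^ 2 + ⁅b, a⁆ :=
  calc (a + b) ^ 2 = a ^ 2 + b ^ 2 + ⁅b, a⁆ + 2 * (a * b) := by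
        rw [Ring.lie_def]
        noncomm_ring
    _ = a ^ 2 + b ^ 2 + ⁅b, a⁆ := by rw [h, zero_mul, add_zero]

section LieHom

attribute [local instance 100] LieRing.ofAssociativeRing

variable {k L A : Type*} [CommRing k] [CharP k 2] [LieRing L] [LieAlgebra k L]
  [Ring A] [Algebra k A]

theorem sq_map_add_sub_map_add_lie (f : L →ₗ⁅k⁆ A) (x y x' y' : L) :
    f (x + y) ^ 2 - f (x' + y' + ⁅y, x⁆) = (f x ^ 2 - f x') + (f y ^ 2 - f y') := by
  have two_eq_zero : (2 : A) = 0 := by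
    rw [← map_ofNat (algebraMap k A) 2, CharTwo.two_eq_zero, map_zero]
  rw [map_add f x y, add_sq_of_two_eq_zero two_eq_zero, map_add, map_add, LieHom.map_lie]
  abel

theorem span_sq_sub_eq_span_union (f : L →ₗ⁅k⁆ A) {L₀ L₁ : Submodule k L} (hL : Codisjoint L₀ L₁)
    {sq q P : L → L} (hsq : sq 0 = 0) (hq : q 0 = 0)
    (hP : ∀ x ∈ L₀, ∀ y ∈ L₁, P (x + y) = sq x + q y + ⁅y, x⁆) :
    TwoSidedIdeal.span {u : A | ∃ z, u = f z ^ 2 - f (P z)} =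
      TwoSidedIdeal.span
        ({u : A | ∃ x ∈ L₀, u = f x ^ 2 - f (sq x)} ∪
          {u : A | ∃ y ∈ L₁, u = f y ^ 2 - f (q y)}) := by
  apply le_antisymm
  · rw [TwoSidedIdeal.span_le]
    rintro _ ⟨z, rfl⟩
    obtain ⟨x, y, hx, hy, rfl⟩ := Submodule.codisjoint_iff_exists_add_eq.mp hL z
    rw [hP x hx y hy, sq_map_add_sub_map_add_lie]
    exact add_mem (TwoSidedIdeal.subset_span (Or.inl ⟨x, hx, rfl⟩))
      (TwoSidedIdeal.subset_span (Or.inr ⟨y, hy, rfl⟩))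
  · have P_eq_sq : ∀ x ∈ L₀, P x = sq x := fun x hx ↦ by
      simpa [hq] using hP x hx 0 L₁.zero_mem
    have P_eq_q : ∀ y ∈ L₁, P y = q y := fun y hy ↦ by
      simpa [hsq] using hP 0 L₀.zero_mem y hy
    apply TwoSidedIdeal.span_mono
    rintro _ (⟨x, hx, rfl⟩ | ⟨y, hy, rfl⟩)
    · exact ⟨x, by rw [P_eq_sq x hx]⟩
    · exact ⟨y, by rw [P_eq_q y hy]⟩

theorem restricted_enveloping_algebras_isomorphic_general (f : L →ₗ⁅k⁆ A)
    {L₀ L₁ : Submodule k L} (hL : Codisjoint L₀ L₁)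
    {sq q P : L → L} (hsq : sq 0 = 0) (hq : q 0 = 0)
    (hP : ∀ x ∈ L₀, ∀ y ∈ L₁, P (x + y) = sq x + q y + ⁅y, x⁆) :
    let I := TwoSidedIdeal.span {u : A | ∃ z, u = f z ^ 2 - f (P z)}
    let J := TwoSidedIdeal.span
      ({u : A | ∃ x ∈ L₀, u = f x ^ 2 - f (sq x)} ∪ {u : A | ∃ y ∈ L₁, u = f y ^ 2 - f (q y)})
    I = J ∧ ∃ e : I.ringCon.Quotient ≃ₐ[k] J.ringCon.Quotient, ∀ a : A, e a = a := by
  intro I J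
  have hIJ : I = J := span_sq_sub_eq_span_union f hL hsq hq hP
  exact ⟨hIJ, RingCon.congrₐ k AlgEquiv.refl (congrArg TwoSidedIdeal.ringCon hIJ), fun _ ↦ rfl⟩

end LieHom

open UniversalEnvelopingAlgebra in
/-- Lemma 2.12 of the paper (last assertion): in `U(L)`, the two-sided ideal generated by
`{ ι(z)² − ι(z^{2}) : z ∈ L }` equals the two-sided ideal generated by
`{ ι(x)² − ι(x^[2]) : x ∈ L₀ } ∪ { ι(y)² − ι(q(y)) : y ∈ L₁ }`; consequently the restricted
enveloping algebra `V(ol(L))` of the restricted Lie algebra `ol(L)` and the restricted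
enveloping superalgebra `V(L)` — the quotients of `U(L)` by these two ideals — are
canonically isomorphic `k`-algebras. -/
theorem restricted_enveloping_algebras_isomorphic
    (k : Type*) [Field k] [CharP k 2]
    (L : Type*) [LieRing L] [LieAlgebra k L]
    (L₀ L₁ : Submodule k L)
    (p₀ p₁ : L → L)
    (hmem : ∀ z : L, p₀ z ∈ L₀ ∧ p₁ z ∈ L₁ ∧ z = p₀ z + p₁ z)
    (huniq : ∀ z x y : L, x ∈ L₀ → y ∈ L₁ → z = x + y → p₀ z = x ∧ p₁ z = y)
    (hb00 : ∀ x ∈ L₀, ∀ x' ∈ L₀, ⁅x, x'⁆ ∈ L₀)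
    (hb01 : ∀ x ∈ L₀, ∀ y ∈ L₁, ⁅x, y⁆ ∈ L₁)
    (hb11 : ∀ y ∈ L₁, ∀ y' ∈ L₁, ⁅y, y'⁆ ∈ L₀)
    (q : L → L)
    (hq_mem : ∀ y ∈ L₁, q y ∈ L₀)
    (hq_smul : ∀ (α : k), ∀ y ∈ L₁, q (α • y) = (α ^ 2) • q y)
    (hq_add : ∀ y ∈ L₁, ∀ y' ∈ L₁, q (y + y') = q y + q y' + ⁅y, y'⁆)
    (hq_ad : ∀ y ∈ L₁, ∀ z : L, ⁅y, ⁅y, z⁆⁆ = ⁅q y, z⁆)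
    (sq : L → L)
    (hsq_mem : ∀ x ∈ L₀, sq x ∈ L₀)
    (hsq_smul : ∀ (α : k), ∀ x ∈ L₀, sq (α • x) = (α ^ 2) • sq x)
    (hsq_ad : ∀ x ∈ L₀, ∀ z : L, ⁅sq x, z⁆ = ⁅x, ⁅x, z⁆⁆)
    (hsq_add : ∀ x ∈ L₀, ∀ x' ∈ L₀, sq (x + x') = sq x + sq x' + ⁅x', x⁆)
    (P : L → L)
    (hP : ∀ z : L, P z = sq (p₀ z) + q (p₁ z) + ⁅p₁ z, p₀ z⁆) :
    TwoSidedIdeal.span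
        {u : UniversalEnvelopingAlgebra k L | ∃ z : L, u = (ι k z) ^ 2 - ι k (P z)} =
      TwoSidedIdeal.span
        ({u : UniversalEnvelopingAlgebra k L | ∃ x ∈ L₀, u = (ι k x) ^ 2 - ι k (sq x)} ∪
          {u : UniversalEnvelopingAlgebra k L | ∃ y ∈ L₁, u = (ι k y) ^ 2 - ι k (q y)}) ∧
    Nonempty
      ((TwoSidedIdeal.span
          {u : UniversalEnvelopingAlgebra k L |
            ∃ z : L, u = (ι k z) ^ 2 - ι k (P z)}).ringCon.Quotient ≃+*
        (TwoSidedIdeal.span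
          ({u : UniversalEnvelopingAlgebra k L | ∃ x ∈ L₀, u = (ι k x) ^ 2 - ι k (sq x)} ∪
            {u : UniversalEnvelopingAlgebra k L |
              ∃ y ∈ L₁, u = (ι k y) ^ 2 - ι k (q y)})).ringCon.Quotient) := by
  have hL : Codisjoint L₀ L₁ := Submodule.codisjoint_iff_exists_add_eq.mpr fun z ↦
    ⟨p₀ z, p₁ z, (hmem z).1, (hmem z).2.1, (hmem z).2.2.symm⟩
  have hsq_zero : sq 0 = 0 := by simpa using hsq_smul 0 0 L₀.zero_mem
  have hq_zero : q 0 = 0 := by simpa using hq_smul 0 0 L₁.zero_mem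
  have hP_add : ∀ x ∈ L₀, ∀ y ∈ L₁, P (x + y) = sq x + q y + ⁅y, x⁆ := fun x hx y hy ↦ by
    obtain ⟨h₀, h₁⟩ := huniq (x + y) x y hx hy rfl
    rw [hP, h₀, h₁]
  obtain ⟨hspan, e, -⟩ :=
    restricted_enveloping_algebras_isomorphic_general (ι k) hL hsq_zero hq_zero hP_add
  exact ⟨hspan, ⟨e.toRingEquiv⟩⟩
end

section
/- Let k be a field of characteristic 2, let P := k[u,v]/(u² + v²), and let Q be the k-subalgebra of P generated by the image of u + v (so Q ≅ k[z]/(z²)). Let M be a P-module that is finite-dimensional as a k-vector space. Then M is NOT free as a Q-module if and only if M has infinite projective dimension as a P-module. Moreover, the trivial P-module k = P/(u,v) has infinite projective dimension over P. -/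
/-- A module `M` over a ring `R` has finite projective dimension if it admits a projective
resolution that vanishes in all sufficiently large degrees. -/
def HasFiniteProjectiveDimension (R : Type*) [Ring R] (M : Type*) [AddCommGroup M]
    [Module R M] : Prop :=
  ∃ (n : ℕ) (res : CategoryTheory.ProjectiveResolution (ModuleCat.of R M)),
    ∀ i : ℕ, n < i → CategoryTheory.Limits.IsZero (res.complex.X i)

/-!
In characteristic two `u² + v² = z²` for `z = u + v`, so `P` is the polynomial ring `Q[u]` over
`Q = k[z]/(z²)`. If `M` is free over `Q`, the characteristic sequence
`0 ⟶ P ⊗[Q] M ⟶ P ⊗[Q] M ⟶ M ⟶ 0`, whose first map is `u ⊗ 1 - 1 ⊗ u`, is a free resolution of `M`.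
Conversely, multiplication by `z` has equal kernel and image on `P`, hence on every projective
`P`-module, and this property descends along a finite projective resolution to the module it
resolves. A module with this property is free over `Q`: a `k`-basis of a complement of `ker z` is a
`Q`-basis. Since `z` annihilates the nonzero module `k`, that module has infinite projective
dimension.
-/

universe w v u

section Resolution

open CategoryTheory Limits

/-- The augmentation of a complex `K` by a morphism `f : K₀ ⟶ X` is a resolution of `X` when `f`
exhibits `X` as the cokernel of `K₁ ⟶ K₀` and `K` has no homology in positive degrees. -/
noncomputable def projectiveResolutionOfExact {C : Type u} [Category.{v} C] [Abelian C] {X : C}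
    (K : ChainComplex C ℕ) [∀ n, Projective (K.X n)] (f : K.X 0 ⟶ X) (hf : Epi f)
    (w : K.d 1 0 ≫ f = 0) (h₀ : (ShortComplex.mk _ _ w).Exact) (hK : ∀ n, K.ExactAt (n + 1)) :
    ProjectiveResolution X where
  complex := K
  π := (ChainComplex.toSingle₀Equiv K X).symm ⟨f, w⟩
  quasiIso := ⟨fun n => by
    cases n with
    | zero =>
      rw [ChainComplex.quasiIsoAt₀_iff,
        ShortComplex.quasiIso_iff_of_zeros' _ (K.shape _ _ (by simp)) rfl rfl]
      refine (ShortComplex.exact_and_epi_g_iff_of_iso ?_).2 ⟨h₀, hf⟩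
      refine ShortComplex.isoMk (Iso.refl _) (Iso.refl _) (Iso.refl _)
        ((Category.id_comp _).trans (Category.comp_id _).symm) ?_
      refine (Category.id_comp _).trans (Eq.trans ?_ (Category.comp_id _).symm)
      exact (ChainComplex.toSingle₀Equiv_symm_apply_f_zero f w).symm
    | succ n =>
      exact (quasiIsoAt_iff_exactAt' _ _ (ChainComplex.exactAt_succ_single_obj X n)).2 (hK n)⟩

/-- The Yoneda splice of a projective resolution of `X₁` with a short exact sequence
`0 ⟶ X₁ ⟶ X₂ ⟶ X₃ ⟶ 0` whose middle term is projective. -/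
noncomputable def spliceResolution {C : Type u} [Category.{v} C] [Abelian C] {S : ShortComplex C}
    (hS : S.ShortExact) [Projective S.X₂] (Q : ProjectiveResolution S.X₁) :
    ProjectiveResolution S.X₃ :=
  have := hS.mono_f
  let p : Q.complex.X 0 ⟶ S.X₁ := Q.π.f 0
  have hp : Q.complex.d 1 0 ≫ p = 0 := Q.complex_d_comp_π_f_zero
  have : Epi p := inferInstanceAs (Epi (Q.π.f 0))
  let K := Q.complex.augment (p ≫ S.f) (by rw [← Category.assoc, hp, zero_comp])
  have : ∀ n, Projective (K.X n)
    | 0 => inferInstanceAs (Projective S.X₂)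
    | n + 1 => Q.projective n
  have w : (p ≫ S.f) ≫ S.g = 0 := by rw [Category.assoc, S.zero, comp_zero]
  have h₀ : (ShortComplex.mk _ _ w).Exact := by
    let φ : ShortComplex.mk _ _ w ⟶ S := { τ₁ := p, τ₂ := 𝟙 _, τ₃ := 𝟙 _ }
    exact (ShortComplex.exact_iff_of_epi_of_isIso_of_mono φ).2 hS.exact
  have h₁ : (ShortComplex.mk (Q.complex.d 1 0) (p ≫ S.f)
      (by rw [← Category.assoc, hp, zero_comp])).Exact := by
    let φ : ShortComplex.mk _ _ hp ⟶ ShortComplex.mk (Q.complex.d 1 0) (p ≫ S.f)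
        (by rw [← Category.assoc, hp, zero_comp]) := { τ₁ := 𝟙 _, τ₂ := 𝟙 _, τ₃ := S.f }
    exact (ShortComplex.exact_iff_of_epi_of_isIso_of_mono φ).1 Q.exact₀
  projectiveResolutionOfExact K S.g hS.epi_g w h₀ fun
    | 0 => (HomologicalComplex.exactAt_iff' K 2 1 0 (by simp) (by simp)).2 h₁
    | n + 1 => (HomologicalComplex.exactAt_iff' K (n + 3) (n + 2) (n + 1)
        (by simp) (by simp)).2 (Q.exact_succ n)

end Resolution

section CharacteristicSequence

open TensorProduct Polynomial

lemma exists_basis_eq_pow {R A : Type*} [CommRing R] [Ring A] [Algebra R A] {u : A}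
    (hu : Function.Bijective (aeval (R := R) u)) :
    ∃ b : Module.Basis ℕ R A, ∀ n, b n = u ^ n := by
  refine ⟨(basisMonomials R).map (AlgEquiv.ofBijective (aeval u) hu).toLinearEquiv, fun n => ?_⟩
  simp [aeval_monomial]

variable {R A M : Type*} [CommRing R] [CommRing A] [Algebra R A] [AddCommGroup M] [Module R M]
  [Module A M] [IsScalarTower R A M] {u : A}

variable (R M) in
/-- Multiplication by `u ⊗ 1 - 1 ⊗ u` on `A ⊗[R] M`, the first map of the characteristic sequence
`0 ⟶ A ⊗[R] M ⟶ A ⊗[R] M ⟶ M ⟶ 0`. -/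
noncomputable def characteristicMap (u : A) : A ⊗[R] M →ₗ[A] A ⊗[R] M :=
  LinearMap.lsmul A (A ⊗[R] M) u - (Algebra.lsmul R R M u).baseChange A

lemma characteristicMap_tmul (a : A) (m : M) :
    characteristicMap R M u (a ⊗ₜ m) = (u * a) ⊗ₜ m - a ⊗ₜ (u • m) := by
  simp [characteristicMap, smul_tmul']

lemma tmul_sub_one_tmul_smul_mem_range (hu : Algebra.adjoin R {u} = ⊤) (a : A) (m : M) :
    a ⊗ₜ m - 1 ⊗ₜ (a • m) ∈ LinearMap.range (characteristicMap R M u) := by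
  have ha : a ∈ Algebra.adjoin R {u} := hu ▸ Algebra.mem_top
  induction ha using Algebra.adjoin_induction generalizing m with
  | mem x hx =>
    obtain rfl := hx
    exact ⟨1 ⊗ₜ m, by rw [characteristicMap_tmul, mul_one]⟩
  | algebraMap r =>
    rw [algebraMap_smul, Algebra.algebraMap_eq_smul_one, smul_tmul, sub_self]
    exact zero_mem _
  | add x y _ _ hx hy =>
    convert add_mem (hx m) (hy m) using 1
    rw [add_tmul, add_smul, tmul_add]
    abel
  | mul x y _ _ hx hy =>
    convert add_mem (Submodule.smul_mem _ x (hy m)) (hx (y • m)) using 1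
    rw [smul_sub, smul_tmul', smul_tmul', smul_eq_mul, smul_eq_mul, mul_one, mul_smul]
    abel

lemma exact_characteristicMap (hu : Algebra.adjoin R {u} = ⊤) :
    Function.Exact (characteristicMap R M u) ((LinearMap.id : M →ₗ[R] M).liftBaseChange A) := by
  refine fun t => ⟨fun ht => ?_, ?_⟩
  · have hmem : t - 1 ⊗ₜ (LinearMap.id : M →ₗ[R] M).liftBaseChange A t ∈
        LinearMap.range (characteristicMap R M u) := by
      clear ht
      induction t with
      | zero => simp
      | tmul a m => simpa using tmul_sub_one_tmul_smul_mem_range hu a m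
      | add s t hs ht =>
        convert add_mem hs ht using 1
        rw [map_add, tmul_add]
        abel
    simpa [ht] using hmem
  · rintro ⟨t, rfl⟩
    induction t with
    | zero => simp
    | tmul a m => simp [characteristicMap_tmul, mul_smul, smul_comm u a]
    | add s t hs ht => rw [map_add, map_add, hs, ht, add_zero]

variable (R M) in
/-- The map `m ↦ ∑_{i + j = n - 1} uⁱ ⊗ uʲ m`, the divided difference `(xⁿ - yⁿ) / (x - y)` at
`x = u ⊗ 1` and `y = 1 ⊗ u`. When the powers of `u` form a basis of `A`, it gives the value on
`uⁿ ⊗ m` of a left inverse of `characteristicMap R M u`. -/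
noncomputable def dividedDifference (u : A) : ℕ → M →ₗ[R] A ⊗[R] M
  | 0 => 0
  | n + 1 => TensorProduct.mk R A M (u ^ n) + dividedDifference u n ∘ₗ Algebra.lsmul R R M u

lemma characteristicMap_injective (hu : Function.Bijective (aeval (R := R) u)) :
    Function.Injective (characteristicMap R M u) := by
  obtain ⟨b, hb⟩ := exists_basis_eq_pow hu
  let L : A ⊗[R] M →ₗ[R] A ⊗[R] M := TensorProduct.lift (b.constr R (dividedDifference R M u))
  have hL (n : ℕ) (m : M) : L ((u ^ n) ⊗ₜ m) = dividedDifference R M u n m := by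
    rw [TensorProduct.lift.tmul, ← hb, b.constr_basis]
  have hid : L ∘ₗ (characteristicMap R M u).restrictScalars R = LinearMap.id := by
    refine TensorProduct.ext (b.ext fun n => LinearMap.ext fun m => ?_)
    simp [hb, characteristicMap_tmul, ← pow_succ', hL, dividedDifference]
  exact Function.LeftInverse.injective (g := L) (LinearMap.congr_fun hid)

end CharacteristicSequence

namespace HasFiniteProjectiveDimension

section

open CategoryTheory Limits

variable {R : Type u} [Ring R] {M : Type v} [AddCommGroup M] [Module R M]

lemma of_projective [Module.Projective R M] : HasFiniteProjectiveDimension R M := by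
  refine ⟨0, .self (ModuleCat.of R M), fun i hi => ?_⟩
  exact HomologicalComplex.isZero_single_obj_X _ _ _ _ hi.ne'

lemma of_exact {A B : Type v} [AddCommGroup A] [AddCommGroup B] [Module R A] [Module R B]
    [Module.Projective R B] {f : A →ₗ[R] B} {g : B →ₗ[R] M}
    (hA : HasFiniteProjectiveDimension R A) (hf : Function.Injective f)
    (hfg : Function.Exact f g) (hg : Function.Surjective g) :
    HasFiniteProjectiveDimension R M := by
  obtain ⟨n, Q, hQ⟩ := hA
  let S : ShortComplex (ModuleCat.{v} R) :=
    ShortComplex.mk (ModuleCat.ofHom f) (ModuleCat.ofHom g)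
      (ModuleCat.hom_ext hfg.linearMap_comp_eq_zero)
  have hS : S.ShortExact :=
    { exact := (ShortComplex.ShortExact.moduleCat_exact_iff_function_exact S).2 hfg
      mono_f := (ModuleCat.mono_iff_injective _).2 hf
      epi_g := (ModuleCat.epi_iff_surjective _).2 hg }
  have : Projective S.X₂ := inferInstanceAs (Projective (ModuleCat.of R B))
  refine ⟨n + 1, spliceResolution hS Q, fun i hi => ?_⟩
  obtain ⟨j, rfl⟩ := Nat.exists_eq_add_of_le' (Nat.one_le_of_lt hi)
  exact hQ j (by omega)

lemma of_exact_of_small {A B : Type*} [AddCommGroup A] [AddCommGroup B] [Module R A] [Module R B]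
    [Small.{v} A] [Small.{v} B] [Module.Projective R A] [Module.Projective R B]
    {f : A →ₗ[R] B} {g : B →ₗ[R] M} (hf : Function.Injective f)
    (hfg : Function.Exact f g) (hg : Function.Surjective g) :
    HasFiniteProjectiveDimension R M := by
  let eA : Shrink.{v} A ≃ₗ[R] A := Shrink.linearEquiv R A
  let eB : Shrink.{v} B ≃ₗ[R] B := Shrink.linearEquiv R B
  have : Module.Projective R (Shrink.{v} A) := .of_equiv eA.symm
  have : Module.Projective R (Shrink.{v} B) := .of_equiv eB.symm
  let f' : Shrink.{v} A →ₗ[R] Shrink.{v} B := eB.symm.toLinearMap ∘ₗ f ∘ₗ eA.toLinearMap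
  let g' : Shrink.{v} B →ₗ[R] M := g ∘ₗ eB.toLinearMap
  have hfg' : Function.Exact f' g' := by
    refine (Function.Exact.iff_of_ladder_linearEquiv (e₁ := eA) (e₂ := eB)
      (e₃ := LinearEquiv.refl R M) ?_ ?_).1 hfg <;> ext <;> simp [f', g']
  exact of_exact of_projective (eB.symm.injective.comp (hf.comp eA.injective)) hfg'
    (hg.comp eB.surjective)

end

open TensorProduct Polynomial in
lemma of_bijective_aeval {R : Type w} {A : Type u} {M : Type v} [CommRing R] [CommRing A]
    [Algebra R A] [AddCommGroup M] [Module R M] [Module A M] [IsScalarTower R A M]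
    [Module.Projective R M] {u : A} (hu : Function.Bijective (aeval (R := R) u)) :
    HasFiniteProjectiveDimension A M := by
  obtain ⟨b, -⟩ := exists_basis_eq_pow hu
  have : Small.{v} (A ⊗[R] M) := small_map (equivFinsuppOfBasisLeft b).toEquiv
  have hA : Algebra.adjoin R {u} = ⊤ := by
    rw [Algebra.adjoin_singleton_eq_range_aeval, AlgHom.range_eq_top]
    exact hu.surjective
  exact of_exact_of_small (characteristicMap_injective hu) (exact_characteristicMap hA)
    fun m => ⟨1 ⊗ₜ m, by simp⟩

end HasFiniteProjectiveDimension

/-- An element `z` acts exactly on `M` if the kernel and the image of multiplication by `z` on `M`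
coincide; for `M = R` this says that `z` is an exact zero divisor with annihilator `(z)`. -/
def IsSMulExact {R : Type*} (M : Type*) [SMul R M] [Zero M] (z : R) : Prop :=
  Function.Exact (fun m : M => z • m) (fun m : M => z • m)

namespace IsSMulExact

variable {R M : Type*} [CommRing R] [AddCommGroup M] [Module R M] {z : R}

lemma smul_smul_eq_zero (hM : IsSMulExact M z) (m : M) : z • z • m = 0 :=
  hM.apply_apply_eq_zero m

lemma of_subsingleton [Subsingleton M] : IsSMulExact M z :=
  fun _ => ⟨fun _ => ⟨0, Subsingleton.elim _ _⟩, fun _ => Subsingleton.elim _ _⟩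

lemma subsingleton_of_smul_eq_zero (hM : IsSMulExact M z) (hz : ∀ m : M, z • m = 0) :
    Subsingleton M :=
  subsingleton_of_forall_eq 0 fun m => by
    obtain ⟨n, rfl⟩ := (hM m).1 (hz m)
    exact hz n

lemma of_flat [Module.Flat R M] (hR : IsSMulExact R z) : IsSMulExact M z := by
  have h : Function.Exact (LinearMap.lsmul R R z) (LinearMap.lsmul R R z) := hR
  have hlTensor := Module.Flat.lTensor_exact M h
  refine (Function.Exact.iff_of_ladder_linearEquiv (e₁ := TensorProduct.rid R M)
    (e₂ := TensorProduct.rid R M) (e₃ := TensorProduct.rid R M)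
    (g₁₂ := LinearMap.lsmul R M z) (g₂₃ := LinearMap.lsmul R M z) ?_ ?_).2 hlTensor <;>
  · ext m
    simp

lemma of_exact {A B C : Type*} [AddCommGroup A] [AddCommGroup B] [AddCommGroup C]
    [Module R A] [Module R B] [Module R C] {f : A →ₗ[R] B} {g : B →ₗ[R] C}
    (hA : IsSMulExact (LinearMap.range f) z) (hB : IsSMulExact B z)
    (hfg : Function.Exact f g) (hg : Function.Surjective g) : IsSMulExact C z := by
  refine fun c => ⟨fun hc => ?_, ?_⟩
  · obtain ⟨b, rfl⟩ := hg c
    have hb : z • b ∈ LinearMap.range f := (hfg _).1 ((map_smul g z b).trans hc)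
    obtain ⟨⟨_, a, rfl⟩, ha⟩ :=
      (hA ⟨z • b, hb⟩).1 (Subtype.ext (hB.smul_smul_eq_zero b))
    have ha' : z • f a = z • b := congrArg Subtype.val ha
    obtain ⟨b', hb'⟩ := (hB (b - f a)).1 (by simp only [smul_sub, ha', sub_self])
    refine ⟨g b', ?_⟩
    calc z • g b' = g (b - f a) := by rw [← map_smul, ← hb']
      _ = g b := by rw [map_sub, hfg.apply_apply_eq_zero, sub_zero]
  · rintro ⟨c, rfl⟩
    obtain ⟨b, rfl⟩ := hg c
    simp only [← map_smul, hB.smul_smul_eq_zero, map_zero]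

lemma mk_of_sq {A : Type*} [CommRing A] {z f : A} (hz : IsLeftRegular z) (hf : z ^ 2 = f) :
    IsSMulExact (A ⧸ Ideal.span {f}) (Ideal.Quotient.mk (Ideal.span {f}) z) := by
  refine fun q => ⟨fun hq => ?_, ?_⟩
  · obtain ⟨a, rfl⟩ := Ideal.Quotient.mk_surjective q
    obtain ⟨c, hc⟩ : z ^ 2 ∣ z * a := by
      rwa [hf, ← Ideal.mem_span_singleton, ← Ideal.Quotient.eq_zero_iff_mem, map_mul]
    have ha : a = z * c := hz (by simpa [sq, mul_assoc] using hc)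
    exact ⟨Ideal.Quotient.mk _ c, by simp [ha]⟩
  · rintro ⟨c, rfl⟩
    have hzz : Ideal.Quotient.mk (Ideal.span {f}) z * Ideal.Quotient.mk (Ideal.span {f}) z = 0 := by
      rw [← map_mul, ← sq, hf]
      exact Ideal.Quotient.eq_zero_iff_mem.2 (Ideal.mem_span_singleton_self f)
    simp only [smul_eq_mul, ← mul_assoc, hzz, zero_mul]

end IsSMulExact

open CategoryTheory in
lemma HasFiniteProjectiveDimension.isSMulExact {R : Type u} [CommRing R] [Small.{v} R]
    {M : Type v} [AddCommGroup M] [Module R M] {z : R} (hM : HasFiniteProjectiveDimension R M)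
    (hR : IsSMulExact R z) : IsSMulExact M z := by
  obtain ⟨n, res, hres⟩ := hM
  have hX (i : ℕ) : IsSMulExact (res.complex.X i) z := .of_flat hR
  have hrange (j i : ℕ) (hij : n ≤ i + j) :
      IsSMulExact (LinearMap.range (res.complex.d (i + 1) i).hom) z := by
    induction j generalizing i with
    | zero =>
      have : Subsingleton (res.complex.X (i + 1)) :=
        ModuleCat.subsingleton_of_isZero (hres (i + 1) (by omega))
      have := (LinearMap.surjective_rangeRestrict (res.complex.d (i + 1) i).hom).subsingleton
      exact .of_subsingleton
    | succ j ih =>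
      have hex := (ShortComplex.ShortExact.moduleCat_exact_iff_function_exact _).1
        (res.exact_succ i)
      refine .of_exact (ih (i + 1) (by omega)) (hX (i + 1))
        (g := (res.complex.d (i + 1) i).hom.rangeRestrict) (fun x => ?_)
        (LinearMap.surjective_rangeRestrict _)
      rw [← hex x]
      exact Subtype.ext_iff
  exact .of_exact (hrange n 0 (by omega)) (hX 0)
    ((ShortComplex.ShortExact.moduleCat_exact_iff_function_exact _).1 res.exact₀)
    ((ModuleCat.epi_iff_surjective (res.π.f 0)).1 inferInstance)

section DualNumbers

open TensorProduct

variable {k A M : Type*} [CommRing A] {z : A}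

lemma exists_algebraMap_add_smul_eq_of_mem_adjoin [CommRing k] [Algebra k A] (hz : z * z = 0)
    {q : A} (hq : q ∈ Algebra.adjoin k {z}) : ∃ a b : k, algebraMap k A a + b • z = q := by
  induction hq using Algebra.adjoin_induction with
  | mem x hx => exact ⟨0, 1, by simpa using hx.symm⟩
  | algebraMap r => exact ⟨r, 0, by simp⟩
  | add x y _ _ hx hy =>
    obtain ⟨a, b, rfl⟩ := hx
    obtain ⟨c, d, rfl⟩ := hy
    exact ⟨a + c, b + d, by rw [map_add, add_smul]; abel⟩
  | mul x y _ _ hx hy =>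
    obtain ⟨a, b, rfl⟩ := hx
    obtain ⟨c, d, rfl⟩ := hy
    refine ⟨a * c, a * d + b * c, ?_⟩
    simp only [Algebra.smul_def, map_add, map_mul]
    linear_combination -(algebraMap k A b * algebraMap k A d) * hz

lemma exists_one_tmul_add_tmul_eq [CommRing k] [Algebra k A] [AddCommGroup M] [Module k M]
    (hz : z * z = 0) (t : Algebra.adjoin k {z} ⊗[k] M) :
    ∃ m m' : M, 1 ⊗ₜ m + ⟨z, Algebra.self_mem_adjoin_singleton k z⟩ ⊗ₜ m' = t := by
  induction t with
  | zero => exact ⟨0, 0, by simp⟩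
  | tmul q m =>
    obtain ⟨a, b, hq⟩ := exists_algebraMap_add_smul_eq_of_mem_adjoin hz q.2
    refine ⟨a • m, b • m, ?_⟩
    rw [← smul_tmul, ← smul_tmul, ← add_tmul]
    congr 1
    exact Subtype.ext (by simp [← hq, Algebra.algebraMap_eq_smul_one])
  | add s t hs ht =>
    obtain ⟨m, m', rfl⟩ := hs
    obtain ⟨n, n', rfl⟩ := ht
    exact ⟨m + n, m' + n', by rw [tmul_add, tmul_add]; abel⟩

lemma IsSMulExact.free_adjoin [Field k] [Algebra k A] [AddCommGroup M] [Module A M]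
    (hM : IsSMulExact M z) (hz : z * z = 0) : Module.Free (Algebra.adjoin k {z}) M := by
  let : Module k M := .compHom M (algebraMap k A)
  have : IsScalarTower k A M := .of_algebraMap_smul fun _ _ => rfl
  let Z : M →ₗ[k] M := Algebra.lsmul k k M z
  obtain ⟨W, hW⟩ := Submodule.exists_isCompl (LinearMap.ker Z)
  have hker (w : W) (hw : z • (w : M) = 0) : w = 0 :=
    Subtype.ext (Submodule.disjoint_def.1 hW.disjoint _ hw w.2)
  have hdecomp (m : M) : ∃ n, z • n = 0 ∧ ∃ w : W, n + w = m := by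
    obtain ⟨n, hn, w, hw, h⟩ := Submodule.mem_sup.1 (hW.sup_eq_top ▸ Submodule.mem_top (x := m))
    exact ⟨n, hn, ⟨w, hw⟩, h⟩
  let e : Algebra.adjoin k {z} ⊗[k] W →ₗ[Algebra.adjoin k {z}] M := W.subtype.liftBaseChange _
  have he (w w' : W) : e (1 ⊗ₜ w + ⟨z, Algebra.self_mem_adjoin_singleton k z⟩ ⊗ₜ w') =
      w + z • (w' : M) := by
    simp [e, Subalgebra.smul_def]
  have hinj : Function.Injective e := by
    refine (injective_iff_map_eq_zero e).2 fun t ht => ?_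
    obtain ⟨w, w', rfl⟩ := exists_one_tmul_add_tmul_eq hz t
    rw [he] at ht
    have hw : w = 0 := hker w <| by
      simpa [smul_smul, hz] using congrArg (z • ·) ht
    have hw' : w' = 0 := hker w' <| by simpa [hw] using ht
    simp [hw, hw']
  have hsurj : Function.Surjective e := fun m => by
    obtain ⟨n, hn, w, rfl⟩ := hdecomp m
    obtain ⟨y, rfl⟩ := (hM n).1 hn
    obtain ⟨n', hn', w', rfl⟩ := hdecomp y
    exact ⟨_, (he w w').trans (by simp [hn', add_comm])⟩
  exact .of_equiv (LinearEquiv.ofBijective e ⟨hinj, hsurj⟩)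

end DualNumbers

section Hypersurface

open MvPolynomial

/-- The hypersurface ring `k[u, v] / (u² + v²)`. -/
abbrev Hypersurface (k : Type*) [CommRing k] : Type _ :=
  MvPolynomial (Fin 2) k ⧸
    Ideal.span {(X 0 : MvPolynomial (Fin 2) k) ^ 2 + (X 1 : MvPolynomial (Fin 2) k) ^ 2}

namespace Hypersurface

variable (k : Type*) [CommRing k]

/-- The coordinate `u` of the hypersurface ring. -/
noncomputable abbrev u : Hypersurface k := Ideal.Quotient.mk _ (X 0)

/-- The coordinate `v` of the hypersurface ring. -/
noncomputable abbrev v : Hypersurface k := Ideal.Quotient.mk _ (X 1)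

/-- The element `z = u + v` of the hypersurface ring, which squares to zero in characteristic
two. -/
noncomputable abbrev z : Hypersurface k := Ideal.Quotient.mk _ (X 0 + X 1)

instance [Small.{w} k] : Small.{w} (Hypersurface k) :=
  have : Small.{w} (MvPolynomial (Fin 2) k) :=
    small_of_injective (f := fun p (m : Fin 2 →₀ ℕ) => p.coeff m) fun _ _ h =>
      MvPolynomial.ext _ _ (congrFun h)
  small_of_surjective (Ideal.Quotient.mk_surjective)

variable {k}

lemma algHom_ext {S : Type*} [Ring S] [Algebra k S] {φ ψ : Hypersurface k →ₐ[k] S}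
    (hu : φ (u k) = ψ (u k)) (hz : φ (z k) = ψ (z k)) : φ = ψ := by
  have hv : φ (z k - u k) = ψ (z k - u k) := by rw [map_sub, map_sub, hu, hz]
  refine Ideal.Quotient.algHom_ext _ (MvPolynomial.algHom_ext fun i => ?_)
  fin_cases i
  · exact hu
  · simpa [z, u] using hv

section CharTwo

variable [CharP k 2]

section Lift

variable {S : Type*} [CommRing S] [Algebra k S] (s c : S) (hc : c * c = 0)

/-- The universal property of the presentation of the hypersurface ring in characteristic two by
the generators `u` and `z` and the relation `z * z = 0`. -/
noncomputable def lift : Hypersurface k →ₐ[k] S :=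
  Ideal.Quotient.liftₐ _ (aeval ![s, c - s]) fun p hp => by
    have htwo : (2 : S) = 0 := by
      rw [← map_ofNat (algebraMap k S), CharTwo.two_eq_zero, map_zero]
    obtain ⟨q, rfl⟩ := Ideal.mem_span_singleton.1 hp
    have h : s ^ 2 + (c - s) ^ 2 = 0 := by linear_combination hc + (s ^ 2 - c * s) * htwo
    simp [h]

lemma lift_u : lift s c hc (u k) = s := by
  refine (Ideal.Quotient.liftₐ_apply _ _ _ _).trans ((Ideal.Quotient.lift_mk _ _ _).trans ?_)
  simp

lemma lift_z : lift s c hc (z k) = c := by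
  refine (Ideal.Quotient.liftₐ_apply _ _ _ _).trans ((Ideal.Quotient.lift_mk _ _ _).trans ?_)
  simp

end Lift

variable (k)

lemma X_add_X_sq : (X 0 + X 1 : MvPolynomial (Fin 2) k) ^ 2 = X 0 ^ 2 + X 1 ^ 2 :=
  CharTwo.add_sq _ _

lemma z_mul_z : z k * z k = 0 := by
  rw [← map_mul, ← sq, X_add_X_sq]
  exact Ideal.Quotient.eq_zero_iff_mem.2 (Ideal.mem_span_singleton_self _)

lemma isSMulExact_z [IsDomain k] : IsSMulExact (Hypersurface k) (z k) := by
  have hne : (X 0 + X 1 : MvPolynomial (Fin 2) k) ≠ 0 := fun h => by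
    simpa using congrArg (aeval ![(1 : k), 0]) h
  exact .mk_of_sq (IsRegular.of_ne_zero hne).left (X_add_X_sq k)

open Polynomial in
lemma bijective_aeval_u :
    Function.Bijective (Polynomial.aeval (R := Algebra.adjoin k {z k}) (u k)) := by
  let z' : Algebra.adjoin k {z k} := ⟨z k, Algebra.self_mem_adjoin_singleton k (z k)⟩
  let φ : (Algebra.adjoin k {z k})[X] →ₐ[k] Hypersurface k :=
    (Polynomial.aeval (u k)).restrictScalars k
  let ψ : Hypersurface k →ₐ[k] (Algebra.adjoin k {z k})[X] :=
    lift Polynomial.X (Polynomial.C z') (by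
      rw [← Polynomial.C_mul, show z' * z' = 0 from Subtype.ext (z_mul_z k), Polynomial.C_0])
  have hφ_X : φ Polynomial.X = u k := Polynomial.aeval_X _
  have hφ_C : φ (Polynomial.C z') = z k := Polynomial.aeval_C _ _
  have hψ_u : ψ (u k) = Polynomial.X := lift_u _ _ _
  have hψ_z : ψ (z k) = Polynomial.C z' := lift_z _ _ _
  have hφψ : φ.comp ψ = AlgHom.id k _ :=
    algHom_ext ((congrArg φ hψ_u).trans hφ_X) ((congrArg φ hψ_z).trans hφ_C)
  have hψφ : ψ.comp φ = AlgHom.id k _ := by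
    refine Polynomial.algHom_ext' (AlgHom.adjoin_ext fun x hx => ?_) ((congrArg ψ hφ_X).trans hψ_u)
    obtain rfl := hx
    exact (congrArg ψ hφ_C).trans hψ_z
  exact ⟨Function.LeftInverse.injective (g := ψ) (DFunLike.congr_fun hψφ),
    Function.RightInverse.surjective (g := ψ) (DFunLike.congr_fun hφψ)⟩

end CharTwo

variable (k)

/-- The trivial module `k[u, v] / (u, v)`. -/
abbrev ResidueModule : Type _ :=
  Hypersurface k ⧸ Ideal.span {u k, v k}

lemma z_smul_residueModule (x : ResidueModule k) : z k • x = 0 := by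
  have hz : z k ∈ Ideal.span {u k, v k} := by
    rw [z, map_add]
    exact add_mem (Ideal.subset_span (by simp)) (Ideal.subset_span (by simp))
  obtain ⟨p, rfl⟩ := Ideal.Quotient.mk_surjective x
  exact Ideal.Quotient.eq_zero_iff_mem.2 (Ideal.mul_mem_right p _ hz)

instance [Nontrivial k] : Nontrivial (ResidueModule k) := by
  let ε : Hypersurface k →ₐ[k] k := Ideal.Quotient.liftₐ _ (aeval 0) fun p hp => by
    obtain ⟨q, rfl⟩ := Ideal.mem_span_singleton.1 hp
    simp
  have hε (i : Fin 2) : ε (Ideal.Quotient.mk _ (X i)) = 0 :=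
    (Ideal.Quotient.lift_mk _ _ _).trans (by simp)
  have hle : Ideal.span {u k, v k} ≤ RingHom.ker ε := by
    rw [Ideal.span_le]
    rintro _ (rfl | rfl)
    exacts [hε 0, hε 1]
  exact Ideal.Quotient.nontrivial_iff.2 (ne_top_of_le_ne_top (RingHom.ker_ne_top ε) hle)

end Hypersurface

lemma small_of_nontrivial_module (k : Type*) (M : Type v) [DivisionRing k] [AddCommGroup M]
    [Nontrivial M] [Module k M] : Small.{v} k := by
  obtain ⟨m, hm⟩ := exists_ne (0 : M)
  exact small_of_injective (smul_left_injective k hm)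

lemma HasFiniteProjectiveDimension.isSMulExact_z {k : Type u} {M : Type v} [Field k] [CharP k 2]
    [AddCommGroup M] [Module (Hypersurface k) M]
    (hM : HasFiniteProjectiveDimension (Hypersurface k) M) :
    IsSMulExact M (Hypersurface.z k) := by
  cases subsingleton_or_nontrivial M with
  | inl _ => exact .of_subsingleton
  | inr _ =>
    -- A nonzero `M` contains a copy of `k`, so `k[u, v] / (u² + v²)` is small in its universe.
    let : Module k M := .compHom M (algebraMap k (Hypersurface k))
    have := small_of_nontrivial_module k M
    exact hM.isSMulExact (Hypersurface.isSMulExact_z k)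

end Hypersurface

theorem not_free_iff_infinite_projective_dimension_general (k : Type*) [Field k] [CharP k 2]
    (M : Type*) [AddCommGroup M] [Module (Hypersurface k) M] :
    (¬ Module.Free (Algebra.adjoin k {Hypersurface.z k}) M ↔
      ¬ HasFiniteProjectiveDimension (Hypersurface k) M) ∧
    ¬ HasFiniteProjectiveDimension (Hypersurface k) (Hypersurface.ResidueModule k) := by
  refine ⟨not_congr ⟨fun hfree => ?_, fun hM => ?_⟩, fun hk => ?_⟩
  · exact .of_bijective_aeval (Hypersurface.bijective_aeval_u k)
  · exact hM.isSMulExact_z.free_adjoin (Hypersurface.z_mul_z k)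
  · have hsub := hk.isSMulExact_z.subsingleton_of_smul_eq_zero (Hypersurface.z_smul_residueModule k)
    exact not_subsingleton (Hypersurface.ResidueModule k) hsub

open MvPolynomial in
/-- Lemma 3.2 of the paper: let `k` be a field of characteristic `2`, let
`P = k[u,v]/(u² + v²)`, and let `Q` be the `k`-subalgebra of `P` generated by the image of
`u + v` (so `Q ≅ k[z]/(z²)`).  A `P`-module `M` that is finite-dimensional over `k` fails to
be free as a `Q`-module if and only if `M` has infinite projective dimension as a
`P`-module.  Moreover the trivial `P`-module `k = P/(u,v)` has infinite projective dimension
over `P`. -/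
theorem not_free_iff_infinite_projective_dimension
    (k : Type*) [Field k] [CharP k 2]
    (M : Type*) [AddCommGroup M]
    [Module (MvPolynomial (Fin 2) k ⧸
      Ideal.span {(X 0 : MvPolynomial (Fin 2) k) ^ 2 + (X 1 : MvPolynomial (Fin 2) k) ^ 2}) M]
    [Module k M]
    [IsScalarTower k
      (MvPolynomial (Fin 2) k ⧸
        Ideal.span {(X 0 : MvPolynomial (Fin 2) k) ^ 2 + (X 1 : MvPolynomial (Fin 2) k) ^ 2}) M]
    [FiniteDimensional k M] :
    (¬ Module.Free
        (Algebra.adjoin k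
          {Ideal.Quotient.mk
            (Ideal.span {(X 0 : MvPolynomial (Fin 2) k) ^ 2
              + (X 1 : MvPolynomial (Fin 2) k) ^ 2})
            (X 0 + X 1)})
        M ↔
      ¬ HasFiniteProjectiveDimension
        (MvPolynomial (Fin 2) k ⧸
          Ideal.span {(X 0 : MvPolynomial (Fin 2) k) ^ 2
            + (X 1 : MvPolynomial (Fin 2) k) ^ 2})
        M) ∧
    ¬ HasFiniteProjectiveDimension
        (MvPolynomial (Fin 2) k ⧸
          Ideal.span {(X 0 : MvPolynomial (Fin 2) k) ^ 2
            + (X 1 : MvPolynomial (Fin 2) k) ^ 2})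
        ((MvPolynomial (Fin 2) k ⧸
            Ideal.span {(X 0 : MvPolynomial (Fin 2) k) ^ 2
              + (X 1 : MvPolynomial (Fin 2) k) ^ 2}) ⧸
          (Ideal.span
            {Ideal.Quotient.mk
                (Ideal.span {(X 0 : MvPolynomial (Fin 2) k) ^ 2
                  + (X 1 : MvPolynomial (Fin 2) k) ^ 2}) (X 0),
              Ideal.Quotient.mk
                (Ideal.span {(X 0 : MvPolynomial (Fin 2) k) ^ 2
                  + (X 1 : MvPolynomial (Fin 2) k) ^ 2}) (X 1)})) := by
  exact not_free_iff_infinite_projective_dimension_general k M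
end
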